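/- Let μ > −1/2, 1/2 < ν < μ+1 and 0 < β < 1. Then for all x > 0, ∫_0^x e^{−βu} u^ν t̃_{μ+1,ν+1}(u) du > (1/(1−β)) · ( (1 − 2ν(μ+ν+(5+√17)/2)/((2ν−1)(1−β)x)) · e^{−βx} x^ν t̃_{μ,ν}(x) − B_{μ,ν,β}(x) ). -/

import Mathlib

/-!
Write `p = t̃_{μ,ν}`, `h = t̃_{μ+1,ν+1}`, `f u = exp (-β u) * u ^ ν * p u`,
`i u = exp (-β u) * u ^ ν * h u`, and `b u = exp (-β u) * u ^ ν * A * (u / 2) ^ μ` with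
`A = 1 / (Γ((μ-ν+1)/2) Γ((μ+ν+3)/2))`, so that `Bconst` is the integral of `b` (`Bconst_eq`).
The power series (`lomE_deriv`, `lomE_shift`) give the first-order system
`p' = ν p / x + h + A (x / 2) ^ μ`, `h' = p - (ν + 1) h / x`.

From the system, two monotonicity arguments give `h ≤ p` (`half_mul_le`) and
`p' ≥ (1 - 1 / (2 x)) p` (`log_deriv_bound`). With `κ = ν + 1 / 2` put
`F x = f x * (1 - 2 ν κ / ((ν - 1 / 2) * ((1 - β) x + κ)))`. The two bounds imply
`F' ≤ (1 - β) i + b` pointwise (`deriv_algebra`), and `F 0 = 0`, so integration gives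
`F x ≤ (1 - β) ∫ i + Bconst`. Since `μ + ν + (5 + √17) / 2 > 2 ν + 1 = 2 κ`, the number
`f x * (1 - 2 ν (μ + ν + (5 + √17) / 2) / ((2 ν - 1) (1 - β) x))` is strictly below `F x`.

The functions `U` and `V` are `p` and `h` with the powers `(x / 2) ^ (μ + 1)` and
`(x / 2) ^ (μ + 2)` removed; unlike `p` and `h` they extend smoothly to `x = 0`.
-/

open Real MeasureTheory

/-- Normalised modified Lommel function of the first kind. -/
noncomputable def lommel (μ ν x : ℝ) : ℝ :=
  ∑' k : ℕ, (x / 2) ^ (μ + 2 * (k : ℝ) + 1) /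
    (Real.Gamma ((k : ℝ) + (μ - ν + 3) / 2) * Real.Gamma ((k : ℝ) + (μ + ν + 3) / 2))

/-- Lower incomplete gamma function. -/
noncomputable def lowerGamma (a x : ℝ) : ℝ :=
  ∫ u in (0:ℝ)..x, Real.exp (-u) * u ^ (a - 1)

noncomputable def Bconst (μ ν β x : ℝ) : ℝ :=
  β ^ (-μ - ν - 1) * lowerGamma (μ + ν + 1) (β * x) /
    (2 ^ μ * Real.Gamma ((μ - ν + 1) / 2) * Real.Gamma ((μ + ν + 3) / 2))

/-- The entire series `∑ zᵏ / (Γ(k+a) Γ(k+b))`; `lommel` is a power of `x / 2` times this series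
at `(x / 2) ^ 2`. -/
noncomputable def lomE (a b z : ℝ) : ℝ :=
  ∑' k : ℕ, z ^ k / (Real.Gamma ((k : ℝ) + a) * Real.Gamma ((k : ℝ) + b))

lemma lomE_summable_pos {a b z : ℝ} (ha : 0 < a) (hb : 0 < b) (hz : 0 < z) :
    Summable fun k : ℕ => z ^ k / (Real.Gamma ((k : ℝ) + a) * Real.Gamma ((k : ℝ) + b)) := by
  have hG : ∀ {c : ℝ}, 0 < c → ∀ k : ℕ, 0 < Real.Gamma ((k : ℝ) + c) := fun hc k =>
    Real.Gamma_pos_of_pos (by positivity)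
  refine summable_of_ratio_test_tendsto_lt_one (l := 0) one_pos
    (Filter.Eventually.of_forall fun k => ?_) ?_
  · have := hG ha k
    have := hG hb k
    positivity
  · have key : ∀ k : ℕ, ‖z ^ (k + 1) / (Real.Gamma (((k + 1 : ℕ) : ℝ) + a) *
          Real.Gamma (((k + 1 : ℕ) : ℝ) + b))‖ /
        ‖z ^ k / (Real.Gamma ((k : ℝ) + a) * Real.Gamma ((k : ℝ) + b))‖
        = z * (((k : ℝ) + a)⁻¹ * ((k : ℝ) + b)⁻¹) := by
      intro k
      have h1 := hG ha k
      have h2 := hG hb k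
      have h3 : (0 : ℝ) < k + a := by positivity
      have h4 : (0 : ℝ) < k + b := by positivity
      have e1 : ((k + 1 : ℕ) : ℝ) + a = (k + a) + 1 := by push_cast; ring
      have e2 : ((k + 1 : ℕ) : ℝ) + b = (k + b) + 1 := by push_cast; ring
      rw [e1, e2, Real.Gamma_add_one h3.ne', Real.Gamma_add_one h4.ne',
        Real.norm_of_nonneg (by positivity), Real.norm_of_nonneg (by positivity), pow_succ]
      field_simp
    simp_rw [key]
    have ht : ∀ c : ℝ, Filter.Tendsto (fun k : ℕ => ((k : ℝ) + c)⁻¹) Filter.atTop (nhds 0) :=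
      fun c => tendsto_inv_atTop_zero.comp
        (Filter.tendsto_atTop_add_const_right _ c tendsto_natCast_atTop_atTop)
    simpa using ((ht a).mul (ht b)).const_mul z

lemma lomE_summable {a b : ℝ} (ha : 0 < a) (hb : 0 < b) (z : ℝ) :
    Summable fun k : ℕ => z ^ k / (Real.Gamma ((k : ℝ) + a) * Real.Gamma ((k : ℝ) + b)) := by
  refine Summable.of_norm_bounded (lomE_summable_pos ha hb (z := |z| + 1) (by positivity))
    fun k => ?_
  have h1 : 0 < Real.Gamma ((k : ℝ) + a) := Real.Gamma_pos_of_pos (by positivity)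
  have h2 : 0 < Real.Gamma ((k : ℝ) + b) := Real.Gamma_pos_of_pos (by positivity)
  rw [norm_div, norm_pow, Real.norm_eq_abs, Real.norm_of_nonneg (mul_pos h1 h2).le]
  gcongr
  linarith

lemma lomE_comm (a b z : ℝ) : lomE a b z = lomE b a z := by
  simp only [lomE, mul_comm]

lemma lomE_pos {a b z : ℝ} (ha : 0 < a) (hb : 0 < b) (hz : 0 ≤ z) : 0 < lomE a b z := by
  have hG : ∀ {c : ℝ}, 0 < c → ∀ k : ℕ, 0 < Real.Gamma ((k : ℝ) + c) := fun hc k =>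
    Real.Gamma_pos_of_pos (by positivity)
  refine (lomE_summable ha hb z).tsum_pos (fun k => ?_) 0 ?_
  · have := hG ha k
    have := hG hb k
    positivity
  · have := hG ha 0
    have := hG hb 0
    simp only [pow_zero]
    positivity

/-- Splitting off the constant term. -/
lemma lomE_shift {a b : ℝ} (ha : 0 < a) (hb : 0 < b) (z : ℝ) :
    lomE a b z = 1 / (Real.Gamma a * Real.Gamma b) + z * lomE (a + 1) (b + 1) z := by
  rw [lomE, (lomE_summable ha hb z).tsum_eq_zero_add, lomE, ← tsum_mul_left]
  congr 1
  · simp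
  · refine tsum_congr fun k => ?_
    have e : ∀ c : ℝ, ((k + 1 : ℕ) : ℝ) + c = k + (c + 1) := fun c => by push_cast; ring
    rw [e, e, pow_succ]
    ring

/-- The contiguous relation `d/dz (z ^ b * lomE a (b + 1) z) = z ^ (b - 1) * lomE a b z`, with the
derivative of `lomE` left implicit. -/
lemma lomE_deriv {a b : ℝ} (ha : 0 < a) (hb : 0 < b) (z : ℝ) :
    ∃ d, HasDerivAt (lomE a (b + 1)) d z ∧ z * d + b * lomE a (b + 1) z = lomE a b z := by
  have hb1 : 0 < b + 1 := by linarith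
  have hG : ∀ {c : ℝ}, 0 < c → ∀ k : ℕ, 0 < Real.Gamma ((k : ℝ) + c) := fun hc k =>
    Real.Gamma_pos_of_pos (by positivity)
  have hR : 0 < |z| + 1 := by positivity
  have hbound : ∀ (k : ℕ) (y : ℝ), y ∈ Metric.ball (0 : ℝ) (|z| + 1) →
      ‖(k : ℝ) * y ^ (k - 1) / (Real.Gamma ((k : ℝ) + a) * Real.Gamma ((k : ℝ) + (b + 1)))‖ ≤
      (2 * (|z| + 1)) ^ k / (Real.Gamma ((k : ℝ) + a) * Real.Gamma ((k : ℝ) + (b + 1))) := by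
    intro k y hy
    have h1 := hG ha k
    have h2 := hG hb1 k
    rw [mem_ball_zero_iff, Real.norm_eq_abs] at hy
    rw [norm_div, norm_mul, norm_pow, Real.norm_eq_abs y, Real.norm_of_nonneg (mul_pos h1 h2).le,
      Real.norm_of_nonneg (Nat.cast_nonneg k), mul_pow]
    have hk : (k : ℝ) ≤ 2 ^ k := by exact_mod_cast (Nat.lt_two_pow_self (n := k)).le
    have hy2 : |y| ^ (k - 1) ≤ (|z| + 1) ^ k :=
      (pow_le_pow_left₀ (abs_nonneg y) hy.le _).trans
        (pow_le_pow_right₀ (by linarith [abs_nonneg z]) (Nat.sub_le k 1))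
    gcongr
  have hz : z ∈ Metric.ball (0 : ℝ) (|z| + 1) := by
    rw [mem_ball_zero_iff, Real.norm_eq_abs]; linarith
  have hsum := lomE_summable ha hb1 (2 * (|z| + 1))
  have hd := hasDerivAt_tsum_of_isPreconnected
    (g := fun (k : ℕ) (y : ℝ) =>
      y ^ k / (Real.Gamma ((k : ℝ) + a) * Real.Gamma ((k : ℝ) + (b + 1))))
    (g' := fun (k : ℕ) (y : ℝ) =>
      (k : ℝ) * y ^ (k - 1) / (Real.Gamma ((k : ℝ) + a) * Real.Gamma ((k : ℝ) + (b + 1))))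
    hsum Metric.isOpen_ball (convex_ball (0 : ℝ) (|z| + 1)).isPreconnected
    (fun k y _ => (hasDerivAt_pow k y).div_const _) hbound hz (lomE_summable ha hb1 z) hz
  refine ⟨_, hd, ?_⟩
  have hs' := Summable.of_norm_bounded hsum (fun k => hbound k z hz)
  rw [lomE, lomE, ← tsum_mul_left, ← tsum_mul_left,
    ← (hs'.mul_left z).tsum_add ((lomE_summable ha hb1 z).mul_left b)]
  refine tsum_congr fun k => ?_
  have h1 := hG ha k
  have h2 := hG hb k
  have h4 : (0 : ℝ) < k + b := by positivity
  rw [← add_assoc, Real.Gamma_add_one h4.ne']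
  rcases k with _ | k
  · field_simp
    simp
  · simp only [Nat.add_sub_cancel]
    field_simp
    ring

lemma lomE_continuous {a b : ℝ} (ha : 0 < a) (hb : 0 < b) : Continuous (lomE a (b + 1)) :=
  continuous_iff_continuousAt.2 fun z => by
    obtain ⟨d, hd, -⟩ := lomE_deriv ha hb z
    exact hd.continuousAt

lemma lommel_eq (μ ν : ℝ) {x : ℝ} (hx : 0 ≤ x) (hμ : 0 < μ + 1) :
    lommel μ ν x = (x / 2) ^ (μ + 1) * lomE ((μ - ν + 3) / 2) ((μ + ν + 3) / 2) ((x / 2) ^ 2) := by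
  rw [lommel, lomE, ← tsum_mul_left]
  refine tsum_congr fun k => ?_
  have : (x / 2) ^ (μ + 2 * (k : ℝ) + 1) = (x / 2) ^ (μ + 1) * ((x / 2) ^ 2) ^ k := by
    have h2 : μ + 2 * (k : ℝ) + 1 = (μ + 1) + ((2 * k : ℕ) : ℝ) := by push_cast; ring
    rw [h2, Real.rpow_add' (by positivity), Real.rpow_natCast, pow_mul]
    have : (0 : ℝ) ≤ ((2 * k : ℕ) : ℝ) := by positivity
    linarith
  rw [this]
  ring

lemma nonneg_of_hasDerivAt_nonneg {g g' : ℝ → ℝ} (hc : ContinuousOn g (Set.Ici 0))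
    (h0 : g 0 = 0) (hd : ∀ x, 0 < x → HasDerivAt g (g' x) x) (hg' : ∀ x, 0 < x → 0 ≤ g' x)
    {x : ℝ} (hx : 0 ≤ x) : 0 ≤ g x := by
  have hm : MonotoneOn g (Set.Ici 0) := by
    refine monotoneOn_of_hasDerivWithinAt_nonneg (f' := g') (convex_Ici 0) hc ?_ ?_
    · intro y hy
      rw [interior_Ici] at hy
      exact (hd y hy).hasDerivWithinAt
    · intro y hy
      rw [interior_Ici] at hy
      exact hg' y hy
  rw [← h0]
  exact hm Set.self_mem_Ici hx hx

lemma hasDerivAt_half_rpow (m : ℝ) {x : ℝ} (hx : 0 < x) :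
    HasDerivAt (fun x : ℝ => (x / 2) ^ m) (m / 2 * (x / 2) ^ (m - 1)) x := by
  have h := ((hasDerivAt_id x).div_const 2).rpow_const (p := m) (Or.inl (by simp; positivity))
  refine h.congr_deriv ?_
  simp only [id]
  ring

lemma continuous_half_rpow {m : ℝ} (hm : 0 ≤ m) : Continuous (fun x : ℝ => (x / 2) ^ m) :=
  (continuous_id.div_const 2).rpow_const fun _ => Or.inr hm

/-- The inequality `t̃_{μ+1,ν+1} ≤ t̃_{μ,ν}`, after division by a power of `x / 2`: the function
`exp x * (t̃_{μ,ν} - t̃_{μ+1,ν+1})` vanishes at `0` and is nondecreasing. -/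
lemma half_mul_le {μ ν A : ℝ} {U V : ℝ → ℝ} (hμ : -1 / 2 < μ) (hν : 1 / 2 < ν) (hA : 0 < A)
    (hUc : Continuous U) (hVc : Continuous V)
    (hU0 : ∀ x, 0 ≤ x → 0 < U x) (hV0 : ∀ x, 0 ≤ x → 0 < V x)
    (hU : ∀ x, 0 < x →
      HasDerivAt U ((A + (x / 2) ^ 2 * V x - (μ - ν + 1) / 2 * U x) / (x / 2)) x)
    (hV : ∀ x, 0 < x → HasDerivAt V ((U x - (μ + ν + 3) / 2 * V x) / (x / 2)) x)
    {x : ℝ} (hx : 0 < x) : x / 2 * V x ≤ U x := by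
  have h := nonneg_of_hasDerivAt_nonneg
    (g := fun x => Real.exp x * (x / 2) ^ (μ + 1) * (U x - x / 2 * V x))
    (g' := fun x => Real.exp x * (x / 2) ^ μ *
      (A + ν / 2 * U x + (ν + 1) / 2 * (x / 2) * V x))
    ?_ ?_ ?_ ?_ hx.le
  · have h1 : 0 < Real.exp x * (x / 2) ^ (μ + 1) := by positivity
    have := nonneg_of_mul_nonneg_right h h1
    linarith
  · have := continuous_half_rpow (m := μ + 1) (by linarith)
    fun_prop
  · simp [Real.zero_rpow (show μ + 1 ≠ 0 by linarith)]
  · intro y hy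
    have h := ((Real.hasDerivAt_exp y).mul (hasDerivAt_half_rpow (μ + 1) hy)).mul
      ((hU y hy).sub (((hasDerivAt_id y).div_const 2).mul (hV y hy)))
    refine h.congr_deriv ?_
    have hy2 : 0 < y / 2 := by positivity
    simp only [id, Pi.mul_apply, Pi.sub_apply, add_sub_cancel_right, Real.rpow_add_one hy2.ne']
    field_simp
    ring
  · intro y hy
    have := hU0 y hy.le
    have := hV0 y hy.le
    positivity

/-- The inequality `t̃' ≥ (1 - 1 / (2 x)) t̃` for `t̃ = t̃_{μ,ν}`, after division by a power of `x / 2`.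
With `w = √x t̃` it says `w' ≥ w`, and it holds because `exp x * (w' - w)` vanishes at `0` and
has derivative `exp x * (w'' - w) ≥ 0`. -/
lemma log_deriv_bound {μ ν A : ℝ} {U V : ℝ → ℝ} (hμ : -1 / 2 < μ) (hν : 1 / 2 < ν) (hA : 0 < A)
    (hUc : Continuous U) (hVc : Continuous V)
    (hU0 : ∀ x, 0 ≤ x → 0 < U x)
    (hU : ∀ x, 0 < x →
      HasDerivAt U ((A + (x / 2) ^ 2 * V x - (μ - ν + 1) / 2 * U x) / (x / 2)) x)
    (hV : ∀ x, 0 < x → HasDerivAt V ((U x - (μ + ν + 3) / 2 * V x) / (x / 2)) x)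
    {x : ℝ} (hx : 0 < x) : 0 ≤ A + (x / 2) ^ 2 * V x + ((ν + 1 / 2) / 2 - x / 2) * U x := by
  have h := nonneg_of_hasDerivAt_nonneg
    (g := fun x => Real.exp x * (x / 2) ^ (μ + 1 / 2) *
      (A + (x / 2) ^ 2 * V x + ((ν + 1 / 2) / 2 - x / 2) * U x))
    (g' := fun x => Real.exp x * (x / 2) ^ (μ + 1 / 2 - 1) *
      ((μ + ν + 1) / 2 * A + (ν + 1 / 2) / 2 * ((ν - 1 / 2) / 2) * U x))
    ?_ ?_ ?_ ?_ hx.le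
  · have h1 : 0 < Real.exp x * (x / 2) ^ (μ + 1 / 2) := by positivity
    exact nonneg_of_mul_nonneg_right h h1
  · have := continuous_half_rpow (m := μ + 1 / 2) (by linarith)
    fun_prop
  · simp [Real.zero_rpow (show μ + 2⁻¹ ≠ 0 by linarith)]
  · intro y hy
    have hh := (hasDerivAt_id y).div_const 2
    have h := ((Real.hasDerivAt_exp y).mul (hasDerivAt_half_rpow (μ + 1 / 2) hy)).mul
      ((((hh.pow 2).mul (hV y hy)).const_add A).add
        ((hh.const_sub ((ν + 1 / 2) / 2)).mul (hU y hy)))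
    refine (h.congr_of_eventuallyEq (Filter.Eventually.of_forall fun z => ?_)).congr_deriv ?_
    · simp
    have hy2 : 0 < y / 2 := by positivity
    have e : (y / 2) ^ (μ + 1 / 2) = (y / 2) ^ (μ + 1 / 2 - 1) * (y / 2) := by
      rw [← Real.rpow_add_one hy2.ne']; ring_nf
    simp only [id, Pi.mul_apply, Pi.add_apply, Pi.pow_apply, e]
    generalize (y / 2) ^ (μ + 1 / 2 - 1) = Y
    field_simp
    ring
  · intro y hy
    have := hU0 y hy.le
    have h1 : 0 < μ + ν + 1 := by linarith
    have h2 : 0 < ν - 1 / 2 := by linarith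
    positivity

lemma Bconst_eq (μ ν β : ℝ) (hβ : 0 < β) {x : ℝ} (hx : 0 < x) (hs : 0 < μ + ν) :
    Bconst μ ν β x = ∫ u in (0:ℝ)..x, Real.exp (-β * u) * u ^ ν *
      ((u / 2) ^ μ * (1 / (Real.Gamma ((μ - ν + 1) / 2) * Real.Gamma ((μ + ν + 3) / 2)))) := by
  have e : lowerGamma (μ + ν + 1) (β * x) =
      β * ∫ u in (0:ℝ)..x, β ^ (μ + ν) * (Real.exp (-β * u) * u ^ (μ + ν)) := by
    have := intervalIntegral.mul_integral_comp_mul_left (a := 0) (b := x) (c := β)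
      (f := fun u => Real.exp (-u) * u ^ (μ + ν + 1 - 1))
    rw [lowerGamma, ← mul_zero β, ← this, mul_zero]
    congr 1
    refine intervalIntegral.integral_congr fun u hu => ?_
    rw [Set.uIcc_of_le hx.le] at hu
    simp only [add_sub_cancel_right]
    rw [Real.mul_rpow hβ.le hu.1]
    ring_nf
  have e2 : ∫ u in (0:ℝ)..x, Real.exp (-β * u) * u ^ ν *
      ((u / 2) ^ μ * (1 / (Real.Gamma ((μ - ν + 1) / 2) * Real.Gamma ((μ + ν + 3) / 2)))) =
      ∫ u in (0:ℝ)..x, (1 / (2 ^ μ * Real.Gamma ((μ - ν + 1) / 2) * Real.Gamma ((μ + ν + 3) / 2)))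
        * (Real.exp (-β * u) * u ^ (μ + ν)) := by
    refine intervalIntegral.integral_congr fun u hu => ?_
    rw [Set.uIcc_of_le hx.le] at hu
    rw [Real.rpow_add' hu.1 hs.ne', Real.div_rpow hu.1 (by norm_num)]
    ring
  rw [e2, Bconst, e, intervalIntegral.integral_const_mul, intervalIntegral.integral_const_mul]
  have : β ^ (-μ - ν - 1) = (β ^ (μ + ν) * β)⁻¹ := by
    rw [← Real.rpow_add_one hβ.ne', ← Real.rpow_neg hβ.le]; ring_nf
  rw [this]
  have : 0 < β ^ (μ + ν) := by positivity
  field_simp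

/-- The pointwise inequality `F' ≤ (1 - β) * i + b` after division by the common positive factor,
with `y` for `x / 2`. After the bounds `h1` and `h2` are used it reduces, for `s = ν - 1 / 2`,
`κ = s + 1` and `z = 2 * (1 - β) * y`, to `κ / s * ((z + s) * (z + κ) - z) ≥ (z + κ) ^ 2`, whose
two sides differ by `z ^ 2 / s`. -/
lemma deriv_algebra {ν β A y U V : ℝ} (hν : 1 / 2 < ν) (hβ1 : 0 < β) (hβ2 : β < 1) (hy : 0 < y)
    (hU : 0 < U) (h1 : y * V ≤ U) (h2 : 0 ≤ A + y ^ 2 * V + ((ν + 1 / 2) / 2 - y) * U) :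
    ((ν - β * y) * U + A + y ^ 2 * V) *
        (1 - 2 * ν * ((ν + 1 / 2) / (ν - 1 / 2)) / ((1 - β) * (2 * y) + (ν + 1 / 2)))
      + 2 * ν * ((ν + 1 / 2) / (ν - 1 / 2)) * (1 - β) / ((1 - β) * (2 * y) + (ν + 1 / 2)) ^ 2
        * (y * U) ≤ (1 - β) * y ^ 2 * V + A := by
  obtain ⟨s, rfl⟩ : ∃ s, ν = s + 1 / 2 := ⟨ν - 1 / 2, by ring⟩
  have hs : 0 < s := by linarith
  have hδ : 0 < 1 - β := by linarith
  set δ := 1 - β with hδdef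
  have hβ : β = 1 - δ := by linarith
  set T := δ * (2 * y) + (s + 1 / 2 + 1 / 2) with hT
  have hTpos : 0 < T := by positivity
  have e1 : s + 1 / 2 - 1 / 2 = s := by ring
  rw [e1]
  set N := 2 * (s + 1 / 2) * ((s + 1 / 2 + 1 / 2) / s) / T with hN
  have hNpos : 0 < N := by positivity
  have e2 : 2 * (s + 1 / 2) * ((s + 1 / 2 + 1 / 2) / s) * δ / T ^ 2 = N * (δ / T) := by
    rw [hN]; field_simp
  rw [e2]
  have h3 : (δ * y + s / 2) * U ≤ (s + 1 / 2 - β * y) * U + A + y ^ 2 * V := by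
    rw [hβ]; nlinarith
  have h4 : (s + 1 / 2) * U ≤ N * ((δ * y + s / 2) * U - δ / T * (y * U)) := by
    have : N * ((δ * y + s / 2) * U - δ / T * (y * U)) - (s + 1 / 2) * U
        = (s + 1 / 2) * U * (δ * (2 * y)) ^ 2 / (s * T ^ 2) := by
      rw [hN, hT]; field_simp; ring
    have : 0 ≤ (s + 1 / 2) * U * (δ * (2 * y)) ^ 2 / (s * T ^ 2) := by positivity
    linarith
  have h5 : N * ((δ * y + s / 2) * U) ≤ N * ((s + 1 / 2 - β * y) * U + A + y ^ 2 * V) :=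
    mul_le_mul_of_nonneg_left h3 hNpos.le
  have h6 : β * (y * (y * V)) ≤ β * (y * U) := by gcongr
  have h7 : δ * y ^ 2 * V = y ^ 2 * V - β * (y * (y * V)) := by rw [hβ]; ring
  rw [h7]
  linarith

theorem stmt10 (μ ν β : ℝ) (hμ : μ > -1/2) (hν1 : 1/2 < ν) (hν2 : ν < μ + 1)
    (hβ1 : 0 < β) (hβ2 : β < 1) :
    ∀ x : ℝ, 0 < x →
      ∫ u in (0:ℝ)..x, Real.exp (-β * u) * u ^ ν * lommel (μ + 1) (ν + 1) u >
        1 / (1 - β) *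
          ((1 - 2 * ν * (μ + ν + (5 + Real.sqrt 17) / 2) / ((2 * ν - 1) * (1 - β) * x)) *
              (Real.exp (-β * x) * x ^ ν * lommel μ ν x) - Bconst μ ν β x) := by
  intro x hx
  have hδ : 0 < 1 - β := by linarith
  have hα : 0 < (μ - ν + 1) / 2 := by linarith
  have hb : 0 < (μ + ν + 3) / 2 := by linarith
  have hb' : 0 < (μ + ν + 1) / 2 := by linarith
  have ea : (μ - ν + 3) / 2 = (μ - ν + 1) / 2 + 1 := by ring
  have eb : (μ + ν + 3) / 2 = (μ + ν + 1) / 2 + 1 := by ring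
  have ha : 0 < (μ - ν + 3) / 2 := by linarith
  obtain ⟨A, hAdef⟩ : ∃ A, A =
    1 / (Real.Gamma ((μ - ν + 1) / 2) * Real.Gamma ((μ + ν + 3) / 2)) := ⟨_, rfl⟩
  have hA : 0 < A := by
    have := Real.Gamma_pos_of_pos hα
    have := Real.Gamma_pos_of_pos hb
    rw [hAdef]; positivity
  obtain ⟨U, hUdef⟩ : ∃ U : ℝ → ℝ, U = fun x =>
    lomE ((μ - ν + 3) / 2) ((μ + ν + 3) / 2) ((x / 2) ^ 2) := ⟨_, rfl⟩
  obtain ⟨V, hVdef⟩ : ∃ V : ℝ → ℝ, V = fun x =>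
    lomE ((μ - ν + 3) / 2) ((μ + ν + 3) / 2 + 1) ((x / 2) ^ 2) := ⟨_, rfl⟩
  have hUc : Continuous U := by
    have := lomE_continuous ha hb'
    rw [← eb] at this
    rw [hUdef]; fun_prop
  have hVc : Continuous V := by
    have := lomE_continuous ha hb
    rw [hVdef]; fun_prop
  have hU0 : ∀ x, 0 ≤ x → 0 < U x := fun x _ => by
    rw [hUdef]; exact lomE_pos ha hb (by positivity)
  have hV0 : ∀ x, 0 ≤ x → 0 < V x := fun x _ => by
    rw [hVdef]; exact lomE_pos ha (by linarith) (by positivity)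
  have hsq : ∀ y : ℝ, HasDerivAt (fun x : ℝ => (x / 2) ^ 2) (y / 2) y := fun y => by
    refine (((hasDerivAt_id y).div_const 2).pow 2).congr_deriv ?_
    simp
    ring
  have hU : ∀ x, 0 < x →
      HasDerivAt U ((A + (x / 2) ^ 2 * V x - (μ - ν + 1) / 2 * U x) / (x / 2)) x := by
    intro y hy
    obtain ⟨d, hd, hd2⟩ := lomE_deriv hb hα ((y / 2) ^ 2)
    have hsh := lomE_shift hα hb ((y / 2) ^ 2)
    rw [← ea, ← hAdef] at hsh
    rw [← ea, lomE_comm _ ((μ - ν + 1) / 2), hsh, lomE_comm] at hd2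
    have hU' : U = fun x => lomE ((μ + ν + 3) / 2) ((μ - ν + 1) / 2 + 1) ((x / 2) ^ 2) := by
      rw [hUdef, ← ea]
      funext x
      exact lomE_comm _ _ _
    have := HasDerivAt.comp y hd (hsq y)
    rw [hU']
    refine this.congr_deriv ?_
    rw [← hU', hUdef, hVdef]
    simp only
    rw [eq_div_iff (by positivity)]
    linear_combination hd2
  have hV : ∀ x, 0 < x → HasDerivAt V ((U x - (μ + ν + 3) / 2 * V x) / (x / 2)) x := by
    intro y hy
    obtain ⟨d, hd, hd2⟩ := lomE_deriv ha hb ((y / 2) ^ 2)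
    have := HasDerivAt.comp y hd (hsq y)
    rw [hVdef]
    refine this.congr_deriv ?_
    rw [hUdef]
    simp only
    rw [eq_div_iff (by positivity)]
    linear_combination hd2
  have hp : lommel μ ν x = (x / 2) ^ (μ + 1) * U x := by
    rw [lommel_eq μ ν hx.le (by linarith), hUdef]
  have hint : ∫ u in (0:ℝ)..x, Real.exp (-β * u) * u ^ ν * lommel (μ + 1) (ν + 1) u =
      ∫ u in (0:ℝ)..x, Real.exp (-β * u) * u ^ ν * ((u / 2) ^ (μ + 2) * V u) := by
    refine intervalIntegral.integral_congr fun u hu => ?_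
    rw [Set.uIcc_of_le hx.le] at hu
    rw [lommel_eq _ _ hu.1 (by linarith), hVdef]
    ring_nf
  have hB := Bconst_eq μ ν β hβ1 hx (by linarith)
  rw [← hAdef] at hB
  have hcν : Continuous fun u : ℝ => u ^ ν :=
    continuous_id.rpow_const fun _ => Or.inr (by linarith)
  have hcI : Continuous fun u : ℝ => Real.exp (-β * u) * u ^ ν * ((u / 2) ^ (μ + 2) * V u) := by
    have := continuous_half_rpow (m := μ + 2) (by linarith)
    fun_prop
  -- `μ` may be negative, so the two powers are merged into `u ^ (μ + ν)` to see continuity at `0`.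
  have hcB : ContinuousOn (fun u : ℝ => Real.exp (-β * u) * u ^ ν * ((u / 2) ^ μ * A))
      (Set.Icc 0 x) := by
    have h1 : Continuous fun u : ℝ => Real.exp (-β * u) * u ^ (μ + ν) * ((2 ^ μ)⁻¹ * A) := by
      have : Continuous fun u : ℝ => u ^ (μ + ν) :=
        continuous_id.rpow_const fun _ => Or.inr (by linarith)
      fun_prop
    refine h1.continuousOn.congr fun u hu => ?_
    beta_reduce
    rw [Real.rpow_add' hu.1 (by linarith), Real.div_rpow hu.1 (by norm_num)]
    ring
  have hiI := hcI.intervalIntegrable (μ := volume) 0 x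
  have hiB := (Set.uIcc_of_le hx.le ▸ hcB : ContinuousOn _ (Set.uIcc 0 x)).intervalIntegrable
    (μ := volume)
  -- `F = f * (1 - 2 * ν * κ / ((ν - 1 / 2) * ((1 - β) * u + κ)))` with `κ = ν + 1 / 2`; `g'` is `F'`
  -- arranged to match `deriv_algebra` at `y = u / 2`, and `φ` is `(1 - β) * i + b`.
  have hFTC := intervalIntegral.sub_le_integral_of_hasDeriv_right_of_le hx.le
    (g := fun u => Real.exp (-β * u) * u ^ ν * ((u / 2) ^ (μ + 1) * U u) *
      (1 - 2 * ν * ((ν + 1 / 2) / (ν - 1 / 2)) / ((1 - β) * u + (ν + 1 / 2))))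
    (g' := fun u => Real.exp (-β * u) * u ^ ν * (u / 2) ^ μ *
      (((ν - β * (u / 2)) * U u + A + (u / 2) ^ 2 * V u) *
        (1 - 2 * ν * ((ν + 1 / 2) / (ν - 1 / 2)) / ((1 - β) * (2 * (u / 2)) + (ν + 1 / 2)))
      + 2 * ν * ((ν + 1 / 2) / (ν - 1 / 2)) * (1 - β) /
          ((1 - β) * (2 * (u / 2)) + (ν + 1 / 2)) ^ 2 * (u / 2 * U u)))
    (φ := fun u => (1 - β) * (Real.exp (-β * u) * u ^ ν * ((u / 2) ^ (μ + 2) * V u)) +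
      Real.exp (-β * u) * u ^ ν * ((u / 2) ^ μ * A)) ?_ ?_ ?_ ?_
  · rw [intervalIntegral.integral_add (hiI.const_mul _) hiB, intervalIntegral.integral_const_mul,
      ← hint, ← hB, ← hp] at hFTC
    simp only [Real.zero_rpow (show ν ≠ 0 by linarith), mul_zero, zero_mul, sub_zero] at hFTC
    set I := ∫ u in (0:ℝ)..x, Real.exp (-β * u) * u ^ ν * lommel (μ + 1) (ν + 1) u
    have hf : 0 < Real.exp (-β * x) * x ^ ν * lommel μ ν x := by
      have := hU0 x hx.le
      rw [hp]; positivity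
    set f := Real.exp (-β * x) * x ^ ν * lommel μ ν x
    have hK : 2 * ν + 1 < μ + ν + (5 + Real.sqrt 17) / 2 := by
      have := Real.sqrt_nonneg 17
      linarith
    have hs : 0 < ν - 1 / 2 := by linarith
    have hν0 : 0 < ν := by linarith
    have hcmp : 2 * ν * ((ν + 1 / 2) / (ν - 1 / 2)) / ((1 - β) * x + (ν + 1 / 2)) <
        2 * ν * (μ + ν + (5 + Real.sqrt 17) / 2) / ((2 * ν - 1) * (1 - β) * x) := by
      have h1 : 0 < 2 * ν - 1 := by linarith
      have e : 2 * ν * ((ν + 1 / 2) / (ν - 1 / 2)) / ((1 - β) * x + (ν + 1 / 2)) =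
          2 * ν * (2 * ν + 1) / ((2 * ν - 1) * ((1 - β) * x + (ν + 1 / 2))) := by
        field_simp
      rw [e, mul_assoc (2 * ν - 1)]
      have h2 : 0 < (1 - β) * x := by positivity
      have h3 : (1 - β) * x < (1 - β) * x + (ν + 1 / 2) := by linarith
      have h4 : 0 < μ + ν + (5 + Real.sqrt 17) / 2 := by linarith
      gcongr
    have := mul_lt_mul_of_pos_right hcmp hf
    rw [gt_iff_lt, one_div, inv_mul_lt_iff₀ hδ]
    linarith
  · refine Continuous.continuousOn ?_ |>.mul ?_
    · have := continuous_half_rpow (m := μ + 1) (by linarith)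
      fun_prop
    · refine continuousOn_const.sub (continuousOn_const.div (by fun_prop) fun u hu => ?_)
      have := mul_nonneg hδ.le hu.1
      linarith
  · intro u hu
    refine HasDerivAt.hasDerivWithinAt ?_
    have hu0 : 0 < u := hu.1
    have hT : 0 < (1 - β) * u + (ν + 1 / 2) := by
      have := mul_pos hδ hu0
      linarith
    have hexp : HasDerivAt (fun u => Real.exp (-β * u)) (Real.exp (-β * u) * (-β)) u := by
      simpa using ((hasDerivAt_id u).const_mul (-β)).exp
    have hpow : HasDerivAt (fun u : ℝ => u ^ ν) (ν * u ^ (ν - 1)) u :=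
      Real.hasDerivAt_rpow_const (Or.inl hu0.ne')
    have hden : HasDerivAt (fun u => (1 - β) * u + (ν + 1 / 2)) (1 - β) u := by
      simpa using ((hasDerivAt_id u).const_mul (1 - β)).add_const (ν + 1 / 2)
    have h := ((hexp.mul hpow).mul ((hasDerivAt_half_rpow (μ + 1) hu0).mul (hU u hu0))).mul
      (((hasDerivAt_const u (2 * ν * ((ν + 1 / 2) / (ν - 1 / 2)))).div hden hT.ne').const_sub 1)
    refine h.congr_deriv ?_
    have hu2 : 0 < u / 2 := by positivity
    have e2 : 2 * (u / 2) = u := by ring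
    have e3 : u ^ ν = u ^ (ν - 1) * u := by
      rw [← Real.rpow_add_one hu0.ne']; ring_nf
    simp only [Pi.mul_apply, Pi.div_apply, add_sub_cancel_right, Real.rpow_add_one hu2.ne', e2, e3]
    generalize 2 * ν * ((ν + 1 / 2) / (ν - 1 / 2)) = W
    generalize (1 - β) * u + (ν + 1 / 2) = T at hT ⊢
    field_simp
    ring
  · rw [← intervalIntegrable_iff_integrableOn_Icc_of_le hx.le]
    exact (hiI.const_mul _).add hiB
  · intro u hu
    have hu0 : 0 < u := hu.1
    have hu2 : 0 < u / 2 := by positivity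
    have hd := deriv_algebra hν1 hβ1 hβ2 hu2 (hU0 u hu0.le)
      (half_mul_le (by linarith) hν1 hA hUc hVc hU0 hV0 hU hV hu0)
      (log_deriv_bound (by linarith) hν1 hA hUc hVc hU0 hU hV hu0)
    have hw : 0 < Real.exp (-β * u) * u ^ ν * (u / 2) ^ μ := by positivity
    refine (mul_le_mul_of_nonneg_left hd hw.le).trans_eq ?_
    have e : (u / 2) ^ (μ + 2) = (u / 2) ^ μ * (u / 2) ^ 2 := by
      rw [Real.rpow_add hu2]; norm_num
    rw [e]
    ring
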